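/- Let G be a finite simple graph in which every vertex has degree at least 2, and let p be a non-backtracking walk in G of length m. Then p factors through an immersed cycle: there exist a vertex u, a cyclically reduced closed walk c of length n ≥ 3 based at u, and an index t with t + m ≤ n, such that c.getVert (t + k) = p.getVert k for all 0 ≤ k ≤ m. In other words, p occurs as a contiguous subwalk of a cyclically reduced closed walk. (This is the path-cycle extensibility of finite graphs without degree-1 vertices asserted in Remark 2.2.) -/

import Mathlib

open SimpleGraph

/-- One non-backtracking transition between darts, encoded as ordered pairs. -/
def nbStep {V : Type*} (G : SimpleGraph V) (x y : V × V) : Prop :=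
  G.Adj x.1 x.2 ∧ G.Adj y.1 y.2 ∧ x.2 = y.1 ∧ x.1 ≠ y.2

theorem nbStep_back {V : Type*} [Fintype V] {G : SimpleGraph V} [DecidableRel G.Adj]
    (hdeg : ∀ v : V, 2 ≤ G.degree v) {x y : V × V} (h : nbStep G x y) :
    Relation.ReflTransGen (nbStep G) y x := by
  classical
  obtain ⟨u₀, v₀⟩ := x
  obtain ⟨v₁, w₀⟩ := y
  obtain ⟨hx, hy, rfl, hne⟩ := h
  simp only at hx hy hne ⊢
  set S : V → V → Prop := fun u v =>
    G.Adj u v ∧ Relation.ReflTransGen (nbStep G) (v₀, w₀) (u, v) with hS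
  set f : V → V → ℤ := fun u v => if S u v then 1 else 0 with hf
  have hclosed : ∀ u v w, G.Adj v u → G.Adj v w → u ≠ w → f u v ≤ f v w := by
    intro u v w huv hvw hn
    by_cases h1 : S u v
    · have h2 : S v w := ⟨hvw, h1.2.tail ⟨h1.1, hvw, rfl, hn⟩⟩
      simp [hf, h1, h2]
    · simp only [hf, h1, if_false]
      split_ifs <;> simp
  have hout : ∀ v, ∑ w, f v w = ∑ w ∈ G.neighborFinset v, f v w := by
    intro v
    symm
    apply Finset.sum_subset (Finset.subset_univ _)
    intro w _ hw
    have : ¬ S v w := fun hs => hw (by simpa using hs.1)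
    simp [hf, this]
  have hin : ∀ v, ∑ u, f u v = ∑ u ∈ G.neighborFinset v, f u v := by
    intro v
    symm
    apply Finset.sum_subset (Finset.subset_univ _)
    intro w _ hw
    have : ¬ S w v := fun hs => hw (by simpa using hs.1.symm)
    simp [hf, this]
  set T : V → ℤ := fun v => ∑ u ∈ G.neighborFinset v, ∑ w ∈ G.neighborFinset v,
    (if u = w then 0 else f v w - f u v) with hT
  have hterm : ∀ v, ∀ u ∈ G.neighborFinset v, ∀ w ∈ G.neighborFinset v,
      0 ≤ (if u = w then 0 else f v w - f u v) := by
    intro v u hu w hw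
    split_ifs with huw
    · exact le_rfl
    · have := hclosed u v w (by simpa using hu) (by simpa using hw) huw
      linarith
  have hT0 : ∀ v, 0 ≤ T v := fun v =>
    Finset.sum_nonneg fun u hu => Finset.sum_nonneg fun w hw => hterm v u hu w hw
  have hTeq : ∀ v, T v = ((G.degree v : ℤ) - 1) * (∑ w, f v w - ∑ u, f u v) := by
    intro v
    have h1 : ∀ u ∈ G.neighborFinset v, ∑ w ∈ G.neighborFinset v,
        (if u = w then 0 else f v w - f u v) =
        (∑ w ∈ G.neighborFinset v, (f v w - f u v)) - (f v u - f u v) := by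
      intro u hu
      rw [eq_sub_iff_add_eq]
      have : (f v u - f u v) = ∑ w ∈ G.neighborFinset v,
          (if u = w then f v w - f u v else 0) := by
        rw [Finset.sum_ite_eq, if_pos hu]
      rw [this, ← Finset.sum_add_distrib]
      apply Finset.sum_congr rfl
      intro w _
      split_ifs <;> simp
    rw [hT]
    simp only
    rw [Finset.sum_congr rfl h1, hout, hin]
    simp only [Finset.sum_sub_distrib, Finset.sum_const, card_neighborFinset_eq_degree,
      nsmul_eq_mul, ← Finset.mul_sum]
    ring
  have hge : ∀ v, 0 ≤ ∑ w, f v w - ∑ u, f u v := by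
    intro v
    have h2 := hdeg v
    have h3 : (0 : ℤ) < (G.degree v : ℤ) - 1 := by omega
    have h4 := hT0 v
    rw [hTeq] at h4
    exact nonneg_of_mul_nonneg_right h4 h3
  have hsum : ∑ v, (∑ w, f v w - ∑ u, f u v) = 0 := by
    rw [Finset.sum_sub_distrib, Finset.sum_comm, sub_self]
  have hz := (Finset.sum_eq_zero_iff_of_nonneg (fun v _ => hge v)).1 hsum v₀ (Finset.mem_univ _)
  have hTz : T v₀ = 0 := by rw [hTeq, hz, mul_zero]
  have hu0 : u₀ ∈ G.neighborFinset v₀ := by simpa using hx.symm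
  have hw0 : w₀ ∈ G.neighborFinset v₀ := by simpa using hy
  have h5 := (Finset.sum_eq_zero_iff_of_nonneg (fun u hu =>
    Finset.sum_nonneg fun w hw => hterm v₀ u hu w hw)).1 hTz u₀ hu0
  have h6 := (Finset.sum_eq_zero_iff_of_nonneg (fun w hw => hterm v₀ u₀ hu0 w hw)).1 h5 w₀ hw0
  rw [if_neg hne] at h6
  have hSy : S v₀ w₀ := ⟨hy, Relation.ReflTransGen.refl⟩
  by_contra hcon
  have hSx : ¬ S u₀ v₀ := fun hs => hcon hs.2
  simp [hf, hSy, hSx] at h6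

theorem nbStep_symm {V : Type*} [Fintype V] {G : SimpleGraph V} [DecidableRel G.Adj]
    (hdeg : ∀ v : V, 2 ≤ G.degree v) {x y : V × V}
    (h : Relation.ReflTransGen (nbStep G) x y) :
    Relation.ReflTransGen (nbStep G) y x := by
  induction h with
  | refl => exact .refl
  | tail _ hs ih => exact (nbStep_back hdeg hs).trans ih

theorem nbStep_chain {V : Type*} {G : SimpleGraph V} {x y : V × V}
    (h : Relation.ReflTransGen (nbStep G) x y) :
    ∃ (N : ℕ) (f : ℕ → V), f 0 = x.1 ∧ f 1 = x.2 ∧ f N = y.1 ∧ f (N + 1) = y.2 ∧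
      ∀ i < N, nbStep G (f i, f (i + 1)) (f (i + 1), f (i + 2)) := by
  induction h using Relation.ReflTransGen.head_induction_on with
  | refl => exact ⟨0, fun i => if i = 0 then y.1 else y.2, by simp⟩
  | @head a c hs _ ih =>
    obtain ⟨N, f, h0, h1, hN, hN1, hf⟩ := ih
    refine ⟨N + 1, fun i => Nat.casesOn i a.1 f, rfl, ?_, hN, hN1, ?_⟩
    · change f 0 = a.2
      rw [h0, hs.2.2.1]
    · intro i hi
      cases i with
      | zero =>
        change nbStep G (a.1, f 0) (f 0, f 1)
        rw [h0, h1, ← hs.2.2.1]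
        obtain ⟨p, q, r, s⟩ := hs
        exact ⟨p, r ▸ q, rfl, s⟩
      | succ j => exact hf j (by omega)

theorem chain_reach {V : Type*} {G : SimpleGraph V} (f : ℕ → V) (N : ℕ)
    (hf : ∀ i < N, nbStep G (f i, f (i + 1)) (f (i + 1), f (i + 2))) :
    Relation.ReflTransGen (nbStep G) (f 0, f 1) (f N, f (N + 1)) := by
  induction N with
  | zero => exact .refl
  | succ n ih => exact (ih fun i hi => hf i (by omega)).tail (hf n (by omega))

theorem walk_of_fun {V : Type*} {G : SimpleGraph V} (n : ℕ) : ∀ (f : ℕ → V),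
    (∀ i < n, G.Adj (f i) (f (i + 1))) →
    ∃ c : G.Walk (f 0) (f n), c.length = n ∧ ∀ i ≤ n, c.getVert i = f i := by
  induction n with
  | zero =>
    intro f _
    refine ⟨Walk.nil, rfl, ?_⟩
    intro i hi
    obtain rfl : i = 0 := by omega
    rfl
  | succ n ih =>
    intro f hf
    obtain ⟨c, hc, hv⟩ := ih (fun i => f (i + 1)) (fun i hi => hf (i + 1) (by omega))
    refine ⟨Walk.cons (hf 0 (by omega)) c, by simp [hc], ?_⟩
    intro i hi
    cases i with
    | zero => rfl
    | succ j => simpa using hv j (by omega)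

theorem exists_other {V : Type*} [Fintype V] {G : SimpleGraph V} [DecidableRel G.Adj]
    (hdeg : ∀ v : V, 2 ≤ G.degree v) (u v : V) : ∃ w, G.Adj v w ∧ u ≠ w := by
  classical
  have h : 1 < (G.neighborFinset v).card := by
    rw [card_neighborFinset_eq_degree]; exact hdeg v
  obtain ⟨w, hw, hne⟩ := Finset.exists_mem_ne h u
  exact ⟨w, by simpa using hw, hne.symm⟩

theorem main_fun {V : Type*} [Fintype V] {G : SimpleGraph V} [DecidableRel G.Adj]
    (hdeg : ∀ v : V, 2 ≤ G.degree v) (M : ℕ) (p : ℕ → V)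
    (hadj : ∀ i < M + 1, G.Adj (p i) (p (i + 1)))
    (hnb : ∀ i < M, p i ≠ p (i + 2)) :
    ∃ (u : V) (c : G.Walk u u) (n : ℕ), c.length = n ∧ 3 ≤ n ∧
      (∀ k, 1 ≤ k → k ≤ n - 1 → c.getVert (k - 1) ≠ c.getVert (k + 1)) ∧
      c.getVert 1 ≠ c.getVert (n - 1) ∧
      M + 1 ≤ n ∧ (∀ k ≤ M + 1, c.getVert k = p k) := by
  have hpc : ∀ i < M, nbStep G (p i, p (i + 1)) (p (i + 1), p (i + 2)) := fun i hi =>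
    ⟨hadj i (by omega), hadj (i + 1) (by omega), rfl, hnb i hi⟩
  have hr := chain_reach p M hpc
  obtain ⟨w, hw, hwne⟩ := exists_other hdeg (p M) (p (M + 1))
  have hs : nbStep G (p M, p (M + 1)) (p (M + 1), w) := ⟨hadj M (by omega), hw, rfl, hwne⟩
  obtain ⟨N, f, h0, h1, hN, hN1, hf⟩ := nbStep_chain (nbStep_symm hdeg (hr.tail hs))
  simp only at h0 h1 hN hN1
  -- the combined sequence
  set g : ℕ → V := fun i => if i ≤ M then p i else f (i - (M + 1)) with hg
  have gp : ∀ i ≤ M + 1, g i = p i := by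
    intro i hi
    by_cases h : i ≤ M
    · simp [hg, h]
    · obtain rfl : i = M + 1 := by omega
      simp [hg, h0]
  have gf : ∀ i, g (M + 1 + i) = f i := by
    intro i
    have : ¬ (M + 1 + i ≤ M) := by omega
    simp [hg, this]
  have hstep : ∀ i < M + 1 + N, nbStep G (g i, g (i + 1)) (g (i + 1), g (i + 2)) := by
    intro i hi
    rcases lt_trichotomy i M with h | h | h
    · rw [gp i (by omega), gp (i + 1) (by omega), gp (i + 2) (by omega)]
      exact hpc i h
    · subst h
      have h2 : g (i + 2) = w := by
        rw [← h1, ← gf 1]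
      rw [gp i (by omega), gp (i + 1) (by omega), h2]
      exact hs
    · obtain ⟨j, rfl⟩ : ∃ j, i = M + 1 + j := ⟨i - (M + 1), by omega⟩
      have a1 : g (M + 1 + j + 1) = f (j + 1) := gf (j + 1)
      have a2 : g (M + 1 + j + 2) = f (j + 2) := gf (j + 2)
      rw [gf j, a1, a2]
      exact hf j (by omega)
  obtain ⟨n, hn⟩ : ∃ n, n = M + 1 + N := ⟨_, rfl⟩
  rw [← hn] at hstep
  have gn : g n = g 0 := by rw [hn, gf, hN, gp 0 (by omega)]
  have gn1 : g (n + 1) = g 1 := by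
    rw [hn, add_assoc, gf, hN1, gp 1 (by omega)]
  have hn3 : 3 ≤ n := by
    by_contra hlt
    have : n = 1 ∨ n = 2 := by omega
    rcases this with h | h
    · rw [h] at gn
      exact (hstep 0 (by omega)).1.ne gn.symm
    · rw [h] at gn
      exact (hstep 0 (by omega)).2.2.2 gn.symm
  obtain ⟨c, hc, hv⟩ := walk_of_fun n g (fun i hi => (hstep i hi).1)
  have key : ∃ c : G.Walk (g 0) (g 0), c.length = n ∧ ∀ i ≤ n, c.getVert i = g i :=
    ⟨c.copy rfl gn, by simpa using hc, by simpa using hv⟩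
  obtain ⟨c, hc, hv⟩ := key
  refine ⟨g 0, c, n, hc, hn3, ?_, ?_, by omega, ?_⟩
  · intro k hk1 hk2
    obtain ⟨j, rfl⟩ : ∃ j, k = j + 1 := ⟨k - 1, by omega⟩
    rw [hv _ (by omega), hv _ (by omega)]
    exact (hstep j (by omega)).2.2.2
  · rw [hv _ (by omega), hv _ (by omega), ← gn1]
    obtain ⟨j, rfl⟩ : ∃ j, n = j + 1 := ⟨n - 1, by omega⟩
    exact (hstep j (by omega)).2.2.2.symm
  · intro k hk
    rw [hv _ (by omega), gp k hk]


open SimpleGraph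

/-- Path-cycle extensibility of finite graphs with all degrees at least 2: every
non-backtracking walk occurs as a contiguous subwalk of some cyclically reduced
closed walk of length at least 3. -/
theorem nonBacktracking_walk_factors_through_immersed_cycle {V : Type*}
    [Fintype V] {G : SimpleGraph V} [DecidableRel G.Adj]
    (hdeg : ∀ v : V, 2 ≤ G.degree v) {a b : V} {m : ℕ}
    (p : G.Walk a b) (hp : p.length = m)
    (hnb : ∀ k, 1 ≤ k → k ≤ m - 1 → p.getVert (k - 1) ≠ p.getVert (k + 1)) :
    ∃ (u : V) (c : G.Walk u u) (n t : ℕ),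
      c.length = n ∧ 3 ≤ n ∧
      (∀ k, 1 ≤ k → k ≤ n - 1 → c.getVert (k - 1) ≠ c.getVert (k + 1)) ∧
      c.getVert 1 ≠ c.getVert (n - 1) ∧
      t + m ≤ n ∧
      (∀ k ≤ m, c.getVert (t + k) = p.getVert k) := by
  cases m with
  | zero =>
    obtain ⟨w, hw, -⟩ := exists_other hdeg a a
    obtain ⟨u, c, n, h1, h2, h3, h4, h5, h6⟩ := main_fun hdeg 0
      (fun i => if i = 0 then a else w)
      (by intro i hi; obtain rfl : i = 0 := by omega
          simpa using hw) (by intro i hi; omega)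
    refine ⟨u, c, n, 0, h1, h2, h3, h4, by omega, ?_⟩
    intro k hk
    obtain rfl : k = 0 := by omega
    have := h6 0 (by omega)
    simpa using this
  | succ M =>
    obtain ⟨u, c, n, h1, h2, h3, h4, h5, h6⟩ := main_fun hdeg M p.getVert
      (fun i hi => p.adj_getVert_succ (by omega))
      (fun i hi => hnb (i + 1) (by omega) (by omega))
    refine ⟨u, c, n, 0, h1, h2, h3, h4, by omega, ?_⟩
    intro k hk
    rw [zero_add]
    exact h6 k hk
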